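/- Every column of J̃ is a solution of L x = 0. Moreover, if K₁, …, K_{d'} are the source knots of Γ and vertices j₁ ∈ K₁, …, j_{d'} ∈ K_{d'} are chosen, then the columns J̃_{•j₁}, …, J̃_{•j_{d'}} form an orthogonal basis of the null space {x ∈ ℝⁿ : Lx = 0}; the column J̃_{•j_s} is zero at every vertex outside K_s, and its entry at each vertex i ∈ K_s equals w(𝒯_s^i)/w(𝒯_s), where 𝒯_s is the set of spanning diverging trees of the restriction of Γ to K_s and 𝒯_s^i is the set of those trees that diverge from i. -/

import Mathlib

/-!
The proof is combinatorial, with a short analytic argument for the dimension of the kernel.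

*Columns of `J̃` are in the kernel.* For a vertex `i`, consider the arc sets `H` with one arc more
than a maximum out-forest that have unique predecessors, a cycle through `i`, and `v` reachable
from `i` (`cyclicForests`). Deleting the arc of the cycle that enters `i` gives a maximum
out-forest rooted at `i`; deleting the arc `(i, k)` of the cycle that leaves `i` gives one rooted
at `k`. Conversely, an arc entering a root of a maximum out-forest must come from the tree of that
root, for otherwise it could be added. Hence `∑ k, W k i * Q i v` and `∑ k, W i k * Q k v` both
equal the weight of `cyclicForests` (`sum_in_eq`, `sum_out_eq`), which is the equation `L J̃ = 0`.

*Kernel vectors are determined by one value per source knot.* If `L x = 0`, the triangle inequality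
and the vanishing column sums of `L` give `L |x| = 0`, so the support of `x` is closed under
predecessors (`ker_ne_zero_of_arc`). Every vertex is reached from a source knot, so a kernel vector
vanishing at a vertex of every source knot is zero (`ker_eq_zero`). The column of `J̃` at a vertex
of a knot `K` vanishes outside `K`, since roots of trees meeting `K` lie in `K`, and it is nonzero
on `K`. The knots being disjoint, the chosen columns are orthogonal and independent, and subtracting
a suitable combination of them from a kernel vector leaves zero.

*Entries.* A maximum out-forest has `d'` roots and each of the `d'` knots contains at least one, so
each contains exactly one. Therefore a maximum out-forest is a spanning tree of `K` combined freely
with the part of a maximum out-forest outside `K`; the weight of the latter cancels in the quotient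
(`Qmat_eq_mul`, `Jtil_eq_div`).
-/

open Matrix Finset

namespace ForestMatrix

variable {n : ℕ}

/-- Reachability from `i` to `j` within a finite set `F` of arcs. -/
def FReach (F : Finset (Fin n × Fin n)) (i j : Fin n) : Prop :=
  Relation.ReflTransGen (fun a b => (a, b) ∈ F) i j

/-- `F` is (the arc set of) a spanning diverging forest (out-forest) of the digraph whose
positive arc weights are recorded in `W`: all arcs of `F` are arcs of the digraph, every
vertex has indegree at most one, and there are no directed cycles. -/
def IsOutForest (W : Matrix (Fin n) (Fin n) ℝ) (F : Finset (Fin n × Fin n)) : Prop :=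
  (∀ e ∈ F, 0 < W e.1 e.2) ∧
  (∀ v : Fin n, ({e ∈ F | e.2 = v} : Finset (Fin n × Fin n)).card ≤ 1) ∧
  (∀ v : Fin n, ¬ Relation.TransGen (fun a b => (a, b) ∈ F) v v)

/-- The weight of a (sub)digraph: the product of its arc weights. -/
noncomputable def wt (W : Matrix (Fin n) (Fin n) ℝ) (F : Finset (Fin n × Fin n)) : ℝ :=
  ∏ e ∈ F, W e.1 e.2

/-- The weight of a set of digraphs: the sum of their weights. -/
noncomputable def wtSet (W : Matrix (Fin n) (Fin n) ℝ)
    (G : Finset (Finset (Fin n × Fin n))) : ℝ :=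
  ∑ F ∈ G, wt W F

open scoped Classical in
/-- The set of all out-forests of the digraph with weight matrix `W`. -/
noncomputable def allOutForests (W : Matrix (Fin n) (Fin n) ℝ) :
    Finset (Finset (Fin n × Fin n)) :=
  Finset.univ.filter (fun F => IsOutForest W F)

open scoped Classical in
/-- The set of all out-forests with `k` arcs. -/
noncomputable def outForests (W : Matrix (Fin n) (Fin n) ℝ) (k : ℕ) :
    Finset (Finset (Fin n × Fin n)) :=
  Finset.univ.filter (fun F => IsOutForest W F ∧ F.card = k)

/-- The number of arcs of a maximum out-forest; it equals `n - d'` where `d'` is the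
out-forest dimension. -/
noncomputable def maxArcs (W : Matrix (Fin n) (Fin n) ℝ) : ℕ :=
  (allOutForests W).sup Finset.card

/-- `σ_k`: the total weight of the out-forests with `k` arcs. -/
noncomputable def sigma (W : Matrix (Fin n) (Fin n) ℝ) (k : ℕ) : ℝ :=
  wtSet W (outForests W k)

/-- `j` belongs to the tree of the forest `F` diverging from `i`:
`i` is a root of `F` and `j` is reachable from `i` in `F`. -/
def inTreeOf (F : Finset (Fin n × Fin n)) (i j : Fin n) : Prop :=
  (∀ e ∈ F, e.2 ≠ i) ∧ FReach F i j

open scoped Classical in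
/-- `Q_k`: the matrix of out-forests with `k` arcs; its `(i,j)` entry is the total weight of
the out-forests with `k` arcs in which `j` belongs to a tree diverging from `i`. -/
noncomputable def Qmat (W : Matrix (Fin n) (Fin n) ℝ) (k : ℕ) :
    Matrix (Fin n) (Fin n) ℝ :=
  fun i j => wtSet W ((outForests W k).filter (fun F => inTreeOf F i j))

/-- The column Laplacian matrix of the digraph with weight matrix `W`. -/
noncomputable def Lap (W : Matrix (Fin n) (Fin n) ℝ) : Matrix (Fin n) (Fin n) ℝ :=
  fun i j => if i = j then ∑ k ∈ Finset.univ.erase i, W k i else -W i j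

/-- `σ(τ) = Σ_{k=0}^{n-d'} σ_k τ^k`. -/
noncomputable def sigmaTau (W : Matrix (Fin n) (Fin n) ℝ) (τ : ℝ) : ℝ :=
  ∑ k ∈ Finset.range (maxArcs W + 1), sigma W k * τ ^ k

/-- `Q(τ) = Σ_{k=0}^{n-d'} Q_k τ^k`. -/
noncomputable def QTau (W : Matrix (Fin n) (Fin n) ℝ) (τ : ℝ) :
    Matrix (Fin n) (Fin n) ℝ :=
  ∑ k ∈ Finset.range (maxArcs W + 1), τ ^ k • Qmat W k

/-- `J(τ) = σ(τ)⁻¹ Q(τ)`. -/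
noncomputable def JTau (W : Matrix (Fin n) (Fin n) ℝ) (τ : ℝ) :
    Matrix (Fin n) (Fin n) ℝ :=
  (sigmaTau W τ)⁻¹ • QTau W τ

/-- `J̃ = σ_{n-d'}⁻¹ Q_{n-d'}`: the normalized matrix of maximum out-forests. -/
noncomputable def Jtil (W : Matrix (Fin n) (Fin n) ℝ) : Matrix (Fin n) (Fin n) ℝ :=
  (sigma W (maxArcs W))⁻¹ • Qmat W (maxArcs W)

/-- Reachability in the digraph with weight matrix `W`. -/
def Reach (W : Matrix (Fin n) (Fin n) ℝ) (i j : Fin n) : Prop :=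
  Relation.ReflTransGen (fun a b => 0 < W a b) i j

/-- `K` is a source knot of the digraph: `K` is the vertex set of a bicomponent
(a maximal strongly connected subgraph) and no arc enters `K` from outside. -/
def IsSourceKnot (W : Matrix (Fin n) (Fin n) ℝ) (K : Finset (Fin n)) : Prop :=
  (∃ i, ∀ j, j ∈ K ↔ (Reach W i j ∧ Reach W j i)) ∧
  (∀ j k, k ∈ K → 0 < W j k → j ∈ K)

open scoped Classical in
/-- `𝒯^k`: the set of spanning diverging trees of the restriction `Γ_K` of `Γ` to `K`
that diverge from `k` (all arcs lie within `K`, and every vertex of `K` is reachable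
from `k`). -/
noncomputable def knotTrees (W : Matrix (Fin n) (Fin n) ℝ) (K : Finset (Fin n))
    (k : Fin n) : Finset (Finset (Fin n × Fin n)) :=
  Finset.univ.filter (fun F => IsOutForest W F ∧ (∀ e ∈ F, e.1 ∈ K ∧ e.2 ∈ K) ∧
    ∀ j ∈ K, FReach F k j)

open scoped Classical in
/-- `𝒯`: the set of all spanning diverging trees of the restriction `Γ_K`. -/
noncomputable def knotTreesAll (W : Matrix (Fin n) (Fin n) ℝ) (K : Finset (Fin n)) :
    Finset (Finset (Fin n × Fin n)) :=
  Finset.univ.filter (fun F => IsOutForest W F ∧ (∀ e ∈ F, e.1 ∈ K ∧ e.2 ∈ K) ∧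
    ∃ k ∈ K, ∀ j ∈ K, FReach F k j)

/-- The weight matrix of `Γ_{−K}`: the spanning subgraph of `Γ` obtained by deleting all
arcs of `Γ_K` (arcs with both endpoints in `K`). -/
noncomputable def Wminus (W : Matrix (Fin n) (Fin n) ℝ) (K : Finset (Fin n)) :
    Matrix (Fin n) (Fin n) ℝ :=
  fun i j => if i ∈ K ∧ j ∈ K then 0 else W i j

/-! ### Paths, roots and acyclicity in arc sets -/

/-- Every vertex has at most one arc of `F` entering it. -/
def InUnique (F : Finset (Fin n × Fin n)) : Prop :=
  ∀ a b v : Fin n, (a, v) ∈ F → (b, v) ∈ F → a = b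

/-- `F` has no directed cycle. -/
def Acyc (F : Finset (Fin n × Fin n)) : Prop :=
  ∀ v : Fin n, ¬ Relation.TransGen (fun a b => (a, b) ∈ F) v v

/-- `i` is a root of `F`: no arc of `F` enters `i`. -/
def IsRoot (F : Finset (Fin n × Fin n)) (i : Fin n) : Prop := ∀ e ∈ F, e.2 ≠ i

theorem isOutForest_iff {W : Matrix (Fin n) (Fin n) ℝ} {F : Finset (Fin n × Fin n)} :
    IsOutForest W F ↔ (∀ e ∈ F, 0 < W e.1 e.2) ∧ InUnique F ∧ Acyc F := by
  have key : (∀ v : Fin n, ({e ∈ F | e.2 = v} : Finset (Fin n × Fin n)).card ≤ 1) ↔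
      InUnique F := by
    constructor
    · intro h a b v ha hb
      have := Finset.card_le_one.1 (h v) (a, v) (by simp [ha]) (b, v) (by simp [hb])
      exact congrArg Prod.fst this
    · intro h v
      rw [Finset.card_le_one]
      rintro ⟨a, v1⟩ ha ⟨b, v2⟩ hb
      simp only [Finset.mem_filter] at ha hb
      obtain ⟨ha, rfl⟩ := ha
      obtain ⟨hb, rfl⟩ := hb
      rw [h _ _ _ ha hb]
  unfold IsOutForest
  rw [key]
  rfl

theorem InUnique.mono {F G : Finset (Fin n × Fin n)} (h : InUnique G) (hs : F ⊆ G) :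
    InUnique F := fun a b v ha hb => h a b v (hs ha) (hs hb)

theorem Acyc.mono {F G : Finset (Fin n × Fin n)} (h : Acyc G) (hs : F ⊆ G) : Acyc F :=
  fun v hv => h v (Relation.TransGen.mono (fun _ _ hab => hs hab) _ _ hv)

theorem FReach.mono {F G : Finset (Fin n × Fin n)} (hs : F ⊆ G) {a b : Fin n}
    (h : FReach F a b) : FReach G a b :=
  Relation.ReflTransGen.mono (fun _ _ hab => hs hab) _ _ h

/-- A root is reached only from itself. -/
theorem IsRoot.eq_of_reach {F : Finset (Fin n × Fin n)} {i a : Fin n} (hi : IsRoot F i)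
    (h : FReach F a i) : a = i := by
  rcases (Relation.ReflTransGen.cases_tail_iff _ _ _).1 h with h | ⟨b, -, hb⟩
  · exact h.symm
  · exact absurd rfl (hi _ hb)

/-- A path starting at `i` can be shortened so as not to use an arc entering `i`. -/
theorem FReach.erase_in {F : Finset (Fin n × Fin n)} {i k v : Fin n} (h : FReach F i v) :
    FReach (F.erase (k, i)) i v := by
  induction h with
  | refl => exact Relation.ReflTransGen.refl
  | @tail b c _ hbc ih =>
    by_cases hc : c = i
    · subst hc; exact Relation.ReflTransGen.refl
    · exact ih.tail (Finset.mem_erase.2 ⟨fun he => hc (congrArg Prod.snd he), hbc⟩)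

/-- A path ending at `i` can be shortened so as not to use an arc leaving `i`. -/
theorem FReach.erase_out {F : Finset (Fin n × Fin n)} {i k a : Fin n} (h : FReach F a i) :
    FReach (F.erase (i, k)) a i := by
  induction h using Relation.ReflTransGen.head_induction_on with
  | refl => exact Relation.ReflTransGen.refl
  | @head b c hbc _ ih =>
    by_cases hc : b = i
    · subst hc; exact Relation.ReflTransGen.refl
    · exact ih.head (Finset.mem_erase.2 ⟨fun he => hc (congrArg Prod.fst he), hbc⟩)

/-- A path using the additional arc `(k, i)` splits at that arc. -/
theorem trans_insert {F : Finset (Fin n × Fin n)} {k i a b : Fin n}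
    (h : Relation.TransGen (fun a b => (a, b) ∈ insert (k, i) F) a b) :
    Relation.TransGen (fun a b => (a, b) ∈ F) a b ∨ (FReach F a k ∧ FReach F i b) := by
  induction h with
  | @single b hb =>
    rcases Finset.mem_insert.1 hb with hb | hb
    · obtain ⟨rfl, rfl⟩ := Prod.mk.inj hb
      exact Or.inr ⟨Relation.ReflTransGen.refl, Relation.ReflTransGen.refl⟩
    · exact Or.inl (.single hb)
  | @tail b c _ hbc ih =>
    rcases Finset.mem_insert.1 hbc with hb | hb
    · obtain ⟨rfl, rfl⟩ := Prod.mk.inj hb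
      rcases ih with ih | ih
      · exact Or.inr ⟨ih.to_reflTransGen, Relation.ReflTransGen.refl⟩
      · exact Or.inr ⟨ih.1, Relation.ReflTransGen.refl⟩
    · rcases ih with ih | ih
      · exact Or.inl (ih.tail hb)
      · exact Or.inr ⟨ih.1, ih.2.tail hb⟩

/-- Adding the arc `(k, i)` to an acyclic arc set creates a cycle only if `i` reaches `k`. -/
theorem reach_of_not_acyc_insert {F : Finset (Fin n × Fin n)} (hF : Acyc F) {k i : Fin n}
    (h : ¬ Acyc (insert (k, i) F)) : FReach F i k := by
  unfold Acyc at h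
  push Not at h
  obtain ⟨x, hx⟩ := h
  rcases trans_insert hx with hx | hx
  · exact absurd hx (hF x)
  · exact Relation.ReflTransGen.trans hx.2 hx.1

theorem Acyc.antisymm {F : Finset (Fin n × Fin n)} (hF : Acyc F) {a b : Fin n}
    (hab : FReach F a b) (hba : FReach F b a) : a = b := by
  rcases Relation.reflTransGen_iff_eq_or_transGen.1 hab with h | h
  · exact h.symm
  · exact absurd (Relation.TransGen.trans_left h hba) (hF a)

/-- Two vertices reaching a common vertex are comparable, since predecessors are unique. -/
theorem InUnique.total {F : Finset (Fin n × Fin n)} (hF : InUnique F) {a b c : Fin n}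
    (hac : FReach F a c) (hbc : FReach F b c) : FReach F a b ∨ FReach F b a := by
  have hu : Relator.RightUnique (Function.swap fun a b => (a, b) ∈ F) :=
    fun v a b ha hb => hF a b v ha hb
  have := Relation.ReflTransGen.total_of_right_unique hu
    (Relation.reflTransGen_swap.2 hac) (Relation.reflTransGen_swap.2 hbc)
  exact this.symm.imp Relation.reflTransGen_swap.1 Relation.reflTransGen_swap.1

/-- In an acyclic arc set every vertex is reached from some root. -/
theorem Acyc.exists_root {F : Finset (Fin n × Fin n)} (hF : Acyc F) (v : Fin n) :
    ∃ i, IsRoot F i ∧ FReach F i v := by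
  let r : Fin n → Fin n → Prop := Relation.TransGen (fun a b => (a, b) ∈ F)
  have : IsTrans (Fin n) r := ⟨fun _ _ _ h1 h2 => h1.trans h2⟩
  have : Std.Irrefl r := ⟨hF⟩
  induction v using (Finite.wellFounded_of_trans_of_irrefl r).induction with
  | _ v ih =>
    by_cases h : IsRoot F v
    · exact ⟨v, h, Relation.ReflTransGen.refl⟩
    · unfold IsRoot at h
      push Not at h
      obtain ⟨⟨a, b⟩, he, rfl⟩ := h
      obtain ⟨i, hi, hia⟩ := ih a (.single he)
      exact ⟨i, hi, hia.tail he⟩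

theorem InUnique.root_unique {F : Finset (Fin n × Fin n)} (hF : InUnique F) {a b v : Fin n}
    (ha : IsRoot F a) (hb : IsRoot F b) (hav : FReach F a v) (hbv : FReach F b v) : a = b := by
  rcases hF.total hav hbv with h | h
  · exact hb.eq_of_reach h
  · exact (ha.eq_of_reach h).symm

theorem InUnique.card_image_snd {F : Finset (Fin n × Fin n)} (hF : InUnique F) :
    (F.image Prod.snd).card = F.card := by
  apply Finset.card_image_of_injOn
  rintro ⟨a, v⟩ ha ⟨b, w⟩ hb (rfl : v = w)
  rw [hF a b v ha hb]

open scoped Classical in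
/-- Each vertex that is not a root is the head of exactly one arc. -/
theorem InUnique.card_add_roots {F : Finset (Fin n × Fin n)} (hF : InUnique F) :
    F.card + (Finset.univ.filter (IsRoot F)).card = n := by
  rw [← hF.card_image_snd]
  have : Finset.univ.filter (IsRoot F) = (F.image Prod.snd)ᶜ := by
    ext v
    simp [IsRoot]
    grind
  rw [this, Finset.card_add_card_compl, Fintype.card_fin]

/-! ### Maximum out-forests -/

theorem mem_outForests {W : Matrix (Fin n) (Fin n) ℝ} {k : ℕ} {F : Finset (Fin n × Fin n)} :
    F ∈ outForests W k ↔ IsOutForest W F ∧ F.card = k := by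
  simp [outForests]

theorem card_le_maxArcs {W : Matrix (Fin n) (Fin n) ℝ} {F : Finset (Fin n × Fin n)}
    (hF : IsOutForest W F) : F.card ≤ maxArcs W :=
  Finset.le_sup (f := Finset.card) (by simpa [allOutForests] using hF)

theorem outForests_nonempty (W : Matrix (Fin n) (Fin n) ℝ) :
    (outForests W (maxArcs W)).Nonempty := by
  have hne : (allOutForests W).Nonempty := by
    refine ⟨∅, ?_⟩
    simp only [allOutForests, Finset.mem_filter, Finset.mem_univ, true_and, isOutForest_iff]
    refine ⟨by simp, by simp [InUnique], ?_⟩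
    intro v hv
    obtain ⟨b, hb, -⟩ := Relation.TransGen.head'_iff.1 hv
    simp at hb
  obtain ⟨F, hF, h⟩ := Finset.exists_mem_eq_sup _ hne Finset.card
  exact ⟨F, mem_outForests.2 ⟨by simpa [allOutForests] using hF, h.symm⟩⟩

theorem wt_pos {W : Matrix (Fin n) (Fin n) ℝ} {F : Finset (Fin n × Fin n)}
    (hF : IsOutForest W F) : 0 < wt W F :=
  Finset.prod_pos hF.1

theorem sigma_pos (W : Matrix (Fin n) (Fin n) ℝ) : 0 < sigma W (maxArcs W) :=
  Finset.sum_pos (fun _ hF => wt_pos (mem_outForests.1 hF).1) (outForests_nonempty W)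

open scoped Classical in
theorem Qmat_nonneg (W : Matrix (Fin n) (Fin n) ℝ) (k : ℕ) (i j : Fin n) :
    0 ≤ Qmat W k i j :=
  Finset.sum_nonneg fun _ hF =>
    (wt_pos (mem_outForests.1 (Finset.mem_filter.1 hF).1).1).le

open scoped Classical in
/-- Each vertex lies in exactly one tree of a forest, so the columns of `Q_k` sum to `σ_k`. -/
theorem sum_Qmat (W : Matrix (Fin n) (Fin n) ℝ) (k : ℕ) (v : Fin n) :
    ∑ i, Qmat W k i v = sigma W k := by
  simp only [Qmat, sigma, wtSet, Finset.sum_filter]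
  rw [Finset.sum_comm]
  refine Finset.sum_congr rfl fun F hF => ?_
  obtain ⟨-, hu, ha⟩ := isOutForest_iff.1 (mem_outForests.1 hF).1
  obtain ⟨i, hi, hiv⟩ := ha.exists_root v
  rw [Finset.sum_eq_single i]
  · rw [if_pos ⟨hi, hiv⟩]
  · intro b _ hb
    rw [if_neg]
    rintro ⟨h1, h2⟩
    exact hb (hu.root_unique h1 hi h2 hiv)
  · simp

/-- A new arc into a root of a maximum out-forest comes from that root's own tree: otherwise
adding it would give a larger out-forest. -/
theorem reach_of_maximum {W : Matrix (Fin n) (Fin n) ℝ} {F : Finset (Fin n × Fin n)}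
    (hF : F ∈ outForests W (maxArcs W)) {i k : Fin n} (hi : IsRoot F i) (hk : 0 < W k i) :
    FReach F i k := by
  obtain ⟨hF, hc⟩ := mem_outForests.1 hF
  obtain ⟨hp, hu, ha⟩ := isOutForest_iff.1 hF
  refine reach_of_not_acyc_insert ha fun hac => ?_
  have hn : (k, i) ∉ F := fun h => hi _ h rfl
  have : IsOutForest W (insert (k, i) F) := by
    refine isOutForest_iff.2 ⟨?_, ?_, hac⟩
    · intro e he
      rcases Finset.mem_insert.1 he with rfl | he
      · exact hk
      · exact hp e he
    · intro a b v h1 h2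
      simp only [Finset.mem_insert, Prod.mk.injEq] at h1 h2
      rcases h1 with ⟨rfl, rfl⟩ | h1 <;> rcases h2 with ⟨rfl, hv⟩ | h2
      · rfl
      · exact absurd rfl (hi _ h2)
      · exact absurd hv (hi _ h1)
      · exact hu _ _ _ h1 h2
  have := card_le_maxArcs this
  rw [Finset.card_insert_of_notMem hn] at this
  omega

/-! ### The columns of `J̃` lie in the kernel of the Laplacian -/

open scoped Classical in
/-- The digraphs obtained from a maximum out-forest by one extra arc that closes a cycle
through `i`, with `v` reachable from that cycle. -/
noncomputable def cyclicForests (W : Matrix (Fin n) (Fin n) ℝ) (i v : Fin n) :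
    Finset (Finset (Fin n × Fin n)) :=
  Finset.univ.filter fun H => (∀ e ∈ H, 0 < W e.1 e.2) ∧ InUnique H ∧
    H.card = maxArcs W + 1 ∧ FReach H i v ∧
    Relation.TransGen (fun a b => (a, b) ∈ H) i i ∧
    ∃ k, (k, i) ∈ H ∧ Acyc (H.erase (k, i))

theorem inUnique_insert {F : Finset (Fin n × Fin n)} (hu : InUnique F) {i k : Fin n}
    (hi : IsRoot F i) : InUnique (insert (k, i) F) := by
  intro a b v h1 h2
  simp only [Finset.mem_insert, Prod.mk.injEq] at h1 h2
  rcases h1 with ⟨rfl, rfl⟩ | h1 <;> rcases h2 with ⟨rfl, hv⟩ | h2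
  · rfl
  · exact absurd rfl (hi _ h2)
  · exact absurd hv (hi _ h1)
  · exact hu _ _ _ h1 h2

theorem InUnique.isRoot_erase {F : Finset (Fin n × Fin n)} (hu : InUnique F) {i k : Fin n}
    (h : (k, i) ∈ F) : IsRoot (F.erase (k, i)) i := by
  rintro ⟨a, b⟩ he (rfl : b = i)
  obtain ⟨hne, he⟩ := Finset.mem_erase.1 he
  exact hne (by rw [hu _ _ _ he h])

open scoped Classical in
/-- Adding an arc into the root `i` of the tree containing `v` yields each member of
`cyclicForests W i v` exactly once: the arc to remove is the one entering `i`. -/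
theorem sum_in_eq (W : Matrix (Fin n) (Fin n) ℝ) (hW0 : ∀ i j, 0 ≤ W i j) (i v : Fin n) :
    ∑ k, W k i * Qmat W (maxArcs W) i v = wtSet W (cyclicForests W i v) := by
  have h1 : ∑ k, W k i * Qmat W (maxArcs W) i v =
      ∑ k ∈ Finset.univ.filter (fun k => 0 < W k i), W k i * Qmat W (maxArcs W) i v := by
    refine (Finset.sum_subset (Finset.subset_univ _) fun k _ hk => ?_).symm
    have : W k i = 0 := le_antisymm (by simpa using hk) (hW0 _ _)
    rw [this, zero_mul]
  rw [h1]
  simp only [Qmat, wtSet, Finset.mul_sum]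
  rw [← Finset.sum_product']
  refine Finset.sum_bij (fun p _ => insert (p.1, i) p.2) ?_ ?_ ?_ ?_
  · rintro ⟨k, F⟩ h
    simp only [Finset.mem_product, Finset.mem_filter, Finset.mem_univ, true_and] at h
    obtain ⟨hk, hF, hi, hv⟩ := h
    obtain ⟨hf, hc⟩ := mem_outForests.1 hF
    obtain ⟨hp, hu, ha⟩ := isOutForest_iff.1 hf
    have hn : (k, i) ∉ F := fun h => hi _ h rfl
    simp only [cyclicForests, Finset.mem_filter, Finset.mem_univ, true_and]
    refine ⟨?_, inUnique_insert hu hi, ?_, hv.mono (Finset.subset_insert _ _), ?_, k,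
      Finset.mem_insert_self _ _, ?_⟩
    · intro e he
      rcases Finset.mem_insert.1 he with rfl | he
      · exact hk
      · exact hp e he
    · rw [Finset.card_insert_of_notMem hn, hc]
    · exact Relation.TransGen.tail'_iff.2 ⟨k, (reach_of_maximum hF hi hk).mono
        (Finset.subset_insert _ _), Finset.mem_insert_self _ _⟩
    · rwa [Finset.erase_insert hn]
  · rintro ⟨k, F⟩ h ⟨k', F'⟩ h' heq
    simp only [Finset.mem_product, Finset.mem_filter, Finset.mem_univ, true_and] at h h'
    obtain ⟨-, -, hi, -⟩ := h
    obtain ⟨-, -, hi', -⟩ := h'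
    have hn : (k, i) ∉ F := fun h => hi _ h rfl
    have hn' : (k', i) ∉ F' := fun h => hi' _ h rfl
    simp only at heq
    have hkk : k = k' := by
      have : (k, i) ∈ insert (k', i) F' := heq ▸ Finset.mem_insert_self _ _
      rcases Finset.mem_insert.1 this with h | h
      · exact congrArg Prod.fst h
      · exact absurd rfl (hi' _ h)
    subst hkk
    rw [← Finset.erase_insert hn, heq, Finset.erase_insert hn']
  · intro H hH
    simp only [cyclicForests, Finset.mem_filter, Finset.mem_univ, true_and] at hH
    obtain ⟨hp, hu, hc, hv, -, k, hk, ha⟩ := hH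
    refine ⟨(k, H.erase (k, i)), ?_, Finset.insert_erase hk⟩
    simp only [Finset.mem_product, Finset.mem_filter, Finset.mem_univ, true_and]
    refine ⟨hp _ hk, mem_outForests.2 ⟨isOutForest_iff.2
      ⟨fun e he => hp e (Finset.mem_of_mem_erase he), hu.mono (Finset.erase_subset _ _), ha⟩,
      ?_⟩, hu.isRoot_erase hk, hv.erase_in⟩
    rw [Finset.card_erase_of_mem hk, hc]; rfl
  · rintro ⟨k, F⟩ h
    simp only [Finset.mem_product, Finset.mem_filter, Finset.mem_univ, true_and] at h
    obtain ⟨-, -, hi, -⟩ := h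
    have hn : (k, i) ∉ F := fun h => hi _ h rfl
    simp only [wt]
    rw [Finset.prod_insert hn]

/-- If `H` has unique predecessors and becomes acyclic when the arc `(p, i)` of a cycle through
`i` is removed, then it also becomes acyclic when the arc `(i, k)` of that cycle is removed. -/
theorem acyc_erase_out {H : Finset (Fin n × Fin n)} (hu : InUnique H) {p i k : Fin n}
    (hp : (p, i) ∈ H) (ha : Acyc (H.erase (p, i))) (hk : (i, k) ∈ H) (hki : k ≠ i)
    (hr : FReach H k i) : Acyc (H.erase (i, k)) := by
  by_contra hcon
  have hEH : (H.erase (p, i)).erase (i, k) ⊆ H.erase (p, i) := Finset.erase_subset _ _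
  have hne : (p, i) ≠ (i, k) := fun h => hki (congrArg Prod.snd h).symm
  have heq : H.erase (i, k) = insert (p, i) ((H.erase (p, i)).erase (i, k)) := by
    rw [Finset.erase_right_comm, Finset.insert_erase (Finset.mem_erase.2 ⟨hne, hp⟩)]
  rw [heq] at hcon
  have h1 : FReach ((H.erase (p, i)).erase (i, k)) i p :=
    reach_of_not_acyc_insert (ha.mono hEH) hcon
  have h2 : FReach H k p := by
    rcases (Relation.ReflTransGen.cases_tail_iff _ _ _).1 hr with h | ⟨b, hb, hbi⟩
    · exact absurd h.symm hki
    · rwa [← hu _ _ _ hbi hp]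
  have h3 : FReach ((H.erase (p, i)).erase (i, k)) k p := h2.erase_out.erase_in
  have hu' : InUnique ((H.erase (p, i)).erase (i, k)) :=
    hu.mono (hEH.trans (Finset.erase_subset _ _))
  -- both `i` and `k` are roots once the arcs `(p, i)` and `(i, k)` are removed
  have hri : IsRoot ((H.erase (p, i)).erase (i, k)) i :=
    fun e he => hu.isRoot_erase hp e (hEH he)
  have hrk : IsRoot ((H.erase (p, i)).erase (i, k)) k := by
    rw [Finset.erase_right_comm]
    exact fun e he => hu.isRoot_erase hk e (Finset.erase_subset _ _ he)
  exact hki (hu'.root_unique hrk hri h3 h1)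

open scoped Classical in
/-- Adding an arc from `i` into the root of the tree containing `v` also yields each member of
`cyclicForests W i v` exactly once: the arc to remove is the arc of the cycle leaving `i`. -/
theorem sum_out_eq (W : Matrix (Fin n) (Fin n) ℝ) (hW0 : ∀ i j, 0 ≤ W i j)
    (hWd : ∀ i, W i i = 0) (i v : Fin n) :
    ∑ k, W i k * Qmat W (maxArcs W) k v = wtSet W (cyclicForests W i v) := by
  have h1 : ∑ k, W i k * Qmat W (maxArcs W) k v =
      ∑ k ∈ Finset.univ.filter (fun k => 0 < W i k), W i k * Qmat W (maxArcs W) k v := by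
    refine (Finset.sum_subset (Finset.subset_univ _) fun k _ hk => ?_).symm
    have : W i k = 0 := le_antisymm (by simpa using hk) (hW0 _ _)
    rw [this, zero_mul]
  rw [h1]
  simp only [Qmat, wtSet, Finset.mul_sum]
  rw [Finset.sum_sigma']
  refine Finset.sum_bij (fun p _ => insert (i, p.1) p.2) ?_ ?_ ?_ ?_
  · rintro ⟨k, F⟩ h
    simp only [Finset.mem_sigma, Finset.mem_filter, Finset.mem_univ, true_and] at h
    obtain ⟨hk, hF, hi, hv⟩ := h
    have hki : k ≠ i := by rintro rfl; rw [hWd] at hk; exact lt_irrefl _ hk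
    obtain ⟨hf, hc⟩ := mem_outForests.1 hF
    obtain ⟨hp, hu, ha⟩ := isOutForest_iff.1 hf
    have hn : (i, k) ∉ F := fun h => hi _ h rfl
    have hsub : F ⊆ insert (i, k) F := Finset.subset_insert _ _
    have hr : FReach F k i := reach_of_maximum hF hi hk
    simp only [cyclicForests, Finset.mem_filter, Finset.mem_univ, true_and]
    refine ⟨?_, inUnique_insert hu hi, ?_,
      (hv.mono hsub).head (Finset.mem_insert_self _ _), ?_, ?_⟩
    · intro e he
      rcases Finset.mem_insert.1 he with rfl | he
      · exact hk
      · exact hp e he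
    · rw [Finset.card_insert_of_notMem hn, hc]
    · exact Relation.TransGen.head'_iff.2 ⟨k, Finset.mem_insert_self _ _, hr.mono hsub⟩
    · rcases (Relation.ReflTransGen.cases_tail_iff _ _ _).1 hr with h | ⟨b, hb, hbi⟩
      · exact absurd h.symm hki
      refine ⟨b, hsub hbi, ?_⟩
      have hne : (i, k) ≠ (b, i) := fun h => hki (congrArg Prod.snd h)
      rw [Finset.erase_insert_of_ne hne]
      by_contra hcon
      have := reach_of_not_acyc_insert (ha.mono (Finset.erase_subset _ _)) hcon
      exact hki ((hu.isRoot_erase hbi).eq_of_reach this)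
  · rintro ⟨k, F⟩ h ⟨k', F'⟩ h' heq
    simp only [Finset.mem_sigma, Finset.mem_filter, Finset.mem_univ, true_and] at h h'
    obtain ⟨hk, hF, hi, -⟩ := h
    obtain ⟨hk', hF', hi', -⟩ := h'
    have hn : (i, k) ∉ F := fun h => hi _ h rfl
    have hn' : (i, k') ∉ F' := fun h => hi' _ h rfl
    simp only at heq
    have ha : Acyc F := (isOutForest_iff.1 (mem_outForests.1 hF).1).2.2
    have hkk : k = k' := by
      by_contra hne
      -- otherwise the cycle leaving `i` towards `k'` survives in `F`
      have h1 : FReach F k' i := by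
        have := ((reach_of_maximum hF' hi' hk').mono
          (Finset.subset_insert (i, k') F')).erase_out (k := k)
        rwa [← heq, Finset.erase_insert hn] at this
      have h2 : (i, k') ∈ F := by
        have : (i, k') ∈ insert (i, k) F := heq ▸ Finset.mem_insert_self _ _
        rcases Finset.mem_insert.1 this with h | h
        · exact absurd (congrArg Prod.snd h).symm hne
        · exact h
      exact ha i (Relation.TransGen.head'_iff.2 ⟨k', h2, h1⟩)
    subst hkk
    rw [← Finset.erase_insert hn, heq, Finset.erase_insert hn']
  · intro H hH
    simp only [cyclicForests, Finset.mem_filter, Finset.mem_univ, true_and] at hH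
    obtain ⟨hp, hu, hc, hv, hcyc, p, hpi, ha⟩ := hH
    obtain ⟨k, hk, hr⟩ := Relation.TransGen.head'_iff.1 hcyc
    have hki : k ≠ i := by
      rintro rfl
      have := hp _ hk
      rw [hWd] at this
      exact lt_irrefl _ this
    refine ⟨⟨k, H.erase (i, k)⟩, ?_, Finset.insert_erase hk⟩
    simp only [Finset.mem_sigma, Finset.mem_filter, Finset.mem_univ, true_and]
    refine ⟨hp _ hk, mem_outForests.2 ⟨isOutForest_iff.2
      ⟨fun e he => hp e (Finset.mem_of_mem_erase he), hu.mono (Finset.erase_subset _ _),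
        acyc_erase_out hu hpi ha hk hki hr⟩, ?_⟩, hu.isRoot_erase hk,
      FReach.erase_in (Relation.ReflTransGen.trans hr hv)⟩
    rw [Finset.card_erase_of_mem hk, hc]; rfl
  · rintro ⟨k, F⟩ h
    simp only [Finset.mem_sigma, Finset.mem_filter, Finset.mem_univ, true_and] at h
    obtain ⟨-, -, hi, -⟩ := h
    have hn : (i, k) ∉ F := fun h => hi _ h rfl
    simp only [wt]
    rw [Finset.prod_insert hn]

theorem lap_mulVec (W : Matrix (Fin n) (Fin n) ℝ) (hWd : ∀ i, W i i = 0)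
    (x : Fin n → ℝ) (i : Fin n) :
    (Lap W).mulVec x i = (∑ k, W k i) * x i - ∑ k, W i k * x k := by
  simp only [Matrix.mulVec, dotProduct]
  rw [← Finset.add_sum_erase _ _ (Finset.mem_univ i),
    ← Finset.add_sum_erase _ (fun k => W i k * x k) (Finset.mem_univ i),
    ← Finset.add_sum_erase _ (fun k => W k i) (Finset.mem_univ i), hWd]
  have : ∑ k ∈ Finset.univ.erase i, Lap W i k * x k =
      -∑ k ∈ Finset.univ.erase i, W i k * x k := by
    rw [← Finset.sum_neg_distrib]
    refine Finset.sum_congr rfl fun k hk => ?_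
    simp only [Lap, if_neg (Finset.ne_of_mem_erase hk).symm]
    ring
  rw [this]
  simp only [Lap, if_true]
  ring

theorem lap_mulVec_eq_zero_iff (W : Matrix (Fin n) (Fin n) ℝ) (hWd : ∀ i, W i i = 0)
    (x : Fin n → ℝ) :
    (Lap W).mulVec x = 0 ↔ ∀ i, (∑ k, W k i) * x i = ∑ k, W i k * x k := by
  simp only [funext_iff, lap_mulVec W hWd, Pi.zero_apply, sub_eq_zero]

theorem lap_mulVec_Jtil (W : Matrix (Fin n) (Fin n) ℝ) (hW0 : ∀ i j, 0 ≤ W i j)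
    (hWd : ∀ i, W i i = 0) (v : Fin n) :
    (Lap W).mulVec (fun i => Jtil W i v) = 0 := by
  rw [lap_mulVec_eq_zero_iff W hWd]
  intro i
  have h := (sum_in_eq W hW0 i v).trans (sum_out_eq W hW0 hWd i v).symm
  rw [← Finset.sum_mul] at h
  simp only [Jtil, Matrix.smul_apply, smul_eq_mul]
  rw [mul_left_comm, h, Finset.mul_sum]
  exact Finset.sum_congr rfl fun k _ => by ring

/-! ### Source knots and supports of kernel vectors -/

theorem reach_refl (W : Matrix (Fin n) (Fin n) ℝ) (a : Fin n) : Reach W a a :=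
  Relation.ReflTransGen.refl

theorem IsSourceKnot.mem_of_reach {W : Matrix (Fin n) (Fin n) ℝ} {K : Finset (Fin n)}
    (hK : IsSourceKnot W K) {a b : Fin n} (hb : b ∈ K) (h : Reach W a b) : a ∈ K := by
  induction h using Relation.ReflTransGen.head_induction_on with
  | refl => exact hb
  | head hab _ ih => exact hK.2 _ _ ih hab

theorem IsSourceKnot.reach {W : Matrix (Fin n) (Fin n) ℝ} {K : Finset (Fin n)}
    (hK : IsSourceKnot W K) {a b : Fin n} (ha : a ∈ K) (hb : b ∈ K) : Reach W a b := by
  obtain ⟨i, hi⟩ := hK.1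
  exact Relation.ReflTransGen.trans ((hi a).1 ha).2 ((hi b).1 hb).1

theorem IsSourceKnot.eq_of_mem {W : Matrix (Fin n) (Fin n) ℝ} {K K' : Finset (Fin n)}
    (hK : IsSourceKnot W K) (hK' : IsSourceKnot W K') {v : Fin n} (h : v ∈ K) (h' : v ∈ K') :
    K = K' := by
  ext a
  exact ⟨fun ha => hK'.mem_of_reach h' (hK.reach ha h),
    fun ha => hK.mem_of_reach h (hK'.reach ha h')⟩

open scoped Classical in
/-- Every vertex is reachable from a source knot: among the vertices reaching `v`, one with the
fewest ancestors lies in a source knot. -/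
theorem exists_sourceKnot (W : Matrix (Fin n) (Fin n) ℝ) (v : Fin n) :
    ∃ K, IsSourceKnot W K ∧ ∃ u ∈ K, Reach W u v := by
  let anc : Fin n → Finset (Fin n) := fun u => Finset.univ.filter (fun a => Reach W a u)
  obtain ⟨u, hu, hmin⟩ := Finset.exists_min_image (anc v) (fun u => (anc u).card)
    ⟨v, by simp [anc, reach_refl]⟩
  simp only [anc, Finset.mem_filter, Finset.mem_univ, true_and] at hu
  refine ⟨Finset.univ.filter (fun w => Reach W u w ∧ Reach W w u), ⟨⟨u, by simp⟩, ?_⟩, u, ?_, hu⟩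
  · intro a b hb hab
    simp only [Finset.mem_filter, Finset.mem_univ, true_and] at hb ⊢
    have hau : Reach W a u := Relation.ReflTransGen.head hab hb.2
    refine ⟨?_, hau⟩
    have hsub : anc a ⊆ anc u := fun c hc => by
      simp only [anc, Finset.mem_filter, Finset.mem_univ, true_and] at hc ⊢
      exact Relation.ReflTransGen.trans hc hau
    have hav : a ∈ anc v := by
      simp only [anc, Finset.mem_filter, Finset.mem_univ, true_and]
      exact Relation.ReflTransGen.trans hau hu
    have heq := Finset.eq_of_subset_of_card_le hsub (hmin a hav)
    have : u ∈ anc a := by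
      rw [heq]; simp [anc, reach_refl]
    simpa [anc] using this
  · simp [reach_refl]

/-- The support of a kernel vector is closed under predecessors. Taking absolute values in
`(∑ k, W k i) x i = ∑ k, W i k x k` gives inequalities for `|x|` whose two sides have the same
total over `i`, so `|x|` is in the kernel as well. -/
theorem ker_ne_zero_of_arc {W : Matrix (Fin n) (Fin n) ℝ} (hW0 : ∀ i j, 0 ≤ W i j)
    (hWd : ∀ i, W i i = 0) {x : Fin n → ℝ} (hx : (Lap W).mulVec x = 0) {a b : Fin n}
    (hab : 0 < W a b) (hb : x b ≠ 0) : x a ≠ 0 := by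
  rw [lap_mulVec_eq_zero_iff W hWd] at hx
  have hle : ∀ i ∈ (Finset.univ : Finset (Fin n)),
      (∑ k, W k i) * |x i| ≤ ∑ k, W i k * |x k| := by
    intro i _
    have h0 : 0 ≤ ∑ k, W k i := Finset.sum_nonneg fun k _ => hW0 k i
    calc (∑ k, W k i) * |x i| = |(∑ k, W k i) * x i| := by rw [abs_mul, abs_of_nonneg h0]
      _ = |∑ k, W i k * x k| := by rw [hx i]
      _ ≤ ∑ k, |W i k * x k| := Finset.abs_sum_le_sum_abs _ _
      _ = ∑ k, W i k * |x k| :=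
        Finset.sum_congr rfl fun k _ => by rw [abs_mul, abs_of_nonneg (hW0 _ _)]
  have htot : ∑ i, (∑ k, W k i) * |x i| = ∑ i, ∑ k, W i k * |x k| := by
    simp only [Finset.sum_mul]
    exact Finset.sum_comm
  have heq := (Finset.sum_eq_sum_iff_of_le hle).1 htot a (Finset.mem_univ a)
  intro ha
  rw [ha, abs_zero, mul_zero] at heq
  have := (Finset.sum_eq_zero_iff_of_nonneg
    (fun k _ => mul_nonneg (hW0 a k) (abs_nonneg (x k)))).1 heq.symm b (Finset.mem_univ b)
  exact (mul_pos hab (abs_pos.2 hb)).ne' this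

theorem ker_ne_zero_of_reach {W : Matrix (Fin n) (Fin n) ℝ} (hW0 : ∀ i j, 0 ≤ W i j)
    (hWd : ∀ i, W i i = 0) {x : Fin n → ℝ} (hx : (Lap W).mulVec x = 0) {a b : Fin n}
    (hab : Reach W a b) (hb : x b ≠ 0) : x a ≠ 0 := by
  induction hab using Relation.ReflTransGen.head_induction_on with
  | refl => exact hb
  | head h _ ih => exact ker_ne_zero_of_arc hW0 hWd hx h ih

/-- A kernel vector vanishing at one vertex of every source knot is zero. -/
theorem ker_eq_zero {W : Matrix (Fin n) (Fin n) ℝ} (hW0 : ∀ i j, 0 ≤ W i j)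
    (hWd : ∀ i, W i i = 0) {x : Fin n → ℝ} (hx : (Lap W).mulVec x = 0)
    (h : ∀ K, IsSourceKnot W K → ∃ p ∈ K, x p = 0) : x = 0 := by
  funext v
  by_contra hv
  obtain ⟨K, hK, u, hu, huv⟩ := exists_sourceKnot W v
  obtain ⟨p, hp, hp0⟩ := h K hK
  exact ker_ne_zero_of_reach hW0 hWd hx
    (Relation.ReflTransGen.trans (hK.reach hp hu) huv) hv hp0

theorem FReach.reach {W : Matrix (Fin n) (Fin n) ℝ} {F : Finset (Fin n × Fin n)}
    (hF : IsOutForest W F) {a b : Fin n} (h : FReach F a b) : Reach W a b :=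
  Relation.ReflTransGen.mono (fun _ _ he => hF.1 _ he) _ _ h

open scoped Classical in
/-- The tree containing a vertex of a source knot has its root in that knot. -/
theorem Jtil_eq_zero {W : Matrix (Fin n) (Fin n) ℝ} {K : Finset (Fin n)}
    (hK : IsSourceKnot W K) {v i : Fin n} (hv : v ∈ K) (hi : i ∉ K) : Jtil W i v = 0 := by
  have : Qmat W (maxArcs W) i v = 0 := by
    unfold Qmat
    rw [Finset.filter_eq_empty_iff.2]
    · simp [wtSet]
    · intro F hF h
      exact hi (hK.mem_of_reach hv (h.2.reach (mem_outForests.1 hF).1))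
  simp [Jtil, this]

/-- The column is a nonzero kernel vector supported in a knot, so its support is the knot. -/
theorem Jtil_self_ne_zero {W : Matrix (Fin n) (Fin n) ℝ} (hW0 : ∀ i j, 0 ≤ W i j)
    (hWd : ∀ i, W i i = 0) {K : Finset (Fin n)}
    (hK : IsSourceKnot W K) {v : Fin n} (hv : v ∈ K) : Jtil W v v ≠ 0 := by
  obtain ⟨i, hi⟩ : ∃ i, Jtil W i v ≠ 0 := by
    by_contra! hcon
    have h := sum_Qmat W (maxArcs W) v
    have hs := sigma_pos W
    have : ∀ i, Qmat W (maxArcs W) i v = 0 := fun i => by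
      simpa [Jtil, hs.ne'] using hcon i
    simp only [this, Finset.sum_const_zero] at h
    exact hs.ne h
  have hiK : i ∈ K := by
    by_contra h
    exact hi (Jtil_eq_zero hK hv h)
  exact ker_ne_zero_of_reach hW0 hWd (x := fun i => Jtil W i v) (lap_mulVec_Jtil W hW0 hWd v)
    (hK.reach hv hiK) hi

/-! ### Splitting maximum out-forests along a source knot -/

theorem mem_knotTrees {W : Matrix (Fin n) (Fin n) ℝ} {K : Finset (Fin n)} {k : Fin n}
    {F : Finset (Fin n × Fin n)} :
    F ∈ knotTrees W K k ↔ IsOutForest W F ∧ (∀ e ∈ F, e.1 ∈ K ∧ e.2 ∈ K) ∧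
      ∀ j ∈ K, FReach F k j := by
  simp [knotTrees]

/-- The arcs of `F` whose head lies in `K`. -/
def inPart (K : Finset (Fin n)) (F : Finset (Fin n × Fin n)) : Finset (Fin n × Fin n) :=
  F.filter (fun e => e.2 ∈ K)

/-- The arcs of `F` whose head lies outside `K`. -/
def outPart (K : Finset (Fin n)) (F : Finset (Fin n × Fin n)) : Finset (Fin n × Fin n) :=
  F.filter (fun e => ¬ e.2 ∈ K)

theorem IsOutForest.mono {W : Matrix (Fin n) (Fin n) ℝ} {F G : Finset (Fin n × Fin n)}
    (hG : IsOutForest W G) (h : F ⊆ G) : IsOutForest W F := by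
  obtain ⟨hp, hu, ha⟩ := isOutForest_iff.1 hG
  exact isOutForest_iff.2 ⟨fun e he => hp e (h he), hu.mono h, ha.mono h⟩

theorem FReach.inPart {W : Matrix (Fin n) (Fin n) ℝ} {K : Finset (Fin n)}
    (hK : IsSourceKnot W K) {F : Finset (Fin n × Fin n)} (hF : IsOutForest W F) {a b : Fin n}
    (h : FReach F a b) (hb : b ∈ K) : FReach (inPart K F) a b := by
  induction h with
  | refl => exact Relation.ReflTransGen.refl
  | @tail b c _ hbc ih =>
    exact (ih (hK.2 _ _ hb (hF.1 _ hbc))).tail (Finset.mem_filter.2 ⟨hbc, hb⟩)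

/-- A forest with a single root `i` in the knot `K` restricts to a tree spanning `K`. -/
theorem inPart_mem_knotTrees {W : Matrix (Fin n) (Fin n) ℝ} {K : Finset (Fin n)}
    (hK : IsSourceKnot W K) {F : Finset (Fin n × Fin n)} (hF : IsOutForest W F) {i : Fin n}
    (huniq : ∀ a ∈ K, IsRoot F a → a = i) : inPart K F ∈ knotTrees W K i := by
  refine mem_knotTrees.2 ⟨hF.mono (Finset.filter_subset _ _), ?_, ?_⟩
  · intro e he
    obtain ⟨he, heK⟩ := Finset.mem_filter.1 he
    exact ⟨hK.2 _ _ heK (hF.1 e he), heK⟩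
  · intro b hb
    obtain ⟨r, hr, hrb⟩ := (isOutForest_iff.1 hF).2.2.exists_root b
    have := huniq r (hK.mem_of_reach hb (hrb.reach hF)) hr
    subst this
    exact hrb.inPart hK hF hb

theorem isRoot_of_mem_knotTrees {W : Matrix (Fin n) (Fin n) ℝ} {K : Finset (Fin n)} {i : Fin n}
    {T : Finset (Fin n × Fin n)} (hT : T ∈ knotTrees W K i) : IsRoot T i := by
  obtain ⟨hf, hs, hr⟩ := mem_knotTrees.1 hT
  rintro ⟨a, b⟩ he (rfl : b = i)
  exact (isOutForest_iff.1 hf).2.2 b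
    (Relation.TransGen.tail'_iff.2 ⟨a, hr a (hs _ he).1, he⟩)

theorem card_of_mem_knotTrees {W : Matrix (Fin n) (Fin n) ℝ} {K : Finset (Fin n)} {i : Fin n}
    (hi : i ∈ K) {T : Finset (Fin n × Fin n)} (hT : T ∈ knotTrees W K i) :
    T.card = K.card - 1 := by
  obtain ⟨hf, hs, hr⟩ := mem_knotTrees.1 hT
  have hroot := isRoot_of_mem_knotTrees hT
  rw [← (isOutForest_iff.1 hf).2.1.card_image_snd, ← Finset.card_erase_of_mem hi]
  congr 1
  ext b
  rw [Finset.mem_image, Finset.mem_erase]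
  constructor
  · rintro ⟨e, he, rfl⟩
    exact ⟨hroot e he, (hs e he).2⟩
  · rintro ⟨hbi, hb⟩
    rcases (Relation.ReflTransGen.cases_tail_iff _ _ _).1 (hr b hb) with h | ⟨a, -, ha⟩
    · exact absurd h hbi
    · exact ⟨(a, b), ha, rfl⟩

/-- The arcs of `T` stay in `K` and the arcs of `outPart K F` never enter `K`, so a cycle of the
glued digraph lies within one of the two parts. -/
theorem glue_isOutForest {W : Matrix (Fin n) (Fin n) ℝ} {K : Finset (Fin n)}
    {i : Fin n} {T F : Finset (Fin n × Fin n)}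
    (hT : T ∈ knotTrees W K i) (hF : IsOutForest W F) : IsOutForest W (T ∪ outPart K F) := by
  obtain ⟨hf, hs, -⟩ := mem_knotTrees.1 hT
  obtain ⟨hp, hu, ha⟩ := isOutForest_iff.1 hf
  obtain ⟨hp', hu', ha'⟩ := isOutForest_iff.1 (hF.mono (F := outPart K F)
    (Finset.filter_subset _ _))
  have hout : ∀ e ∈ outPart K F, e.2 ∉ K := fun e he => (Finset.mem_filter.1 he).2
  refine isOutForest_iff.2 ⟨?_, ?_, ?_⟩
  · intro e he
    exact (Finset.mem_union.1 he).elim (hp e) (hp' e)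
  · intro a b v h1 h2
    rcases Finset.mem_union.1 h1 with h1 | h1 <;> rcases Finset.mem_union.1 h2 with h2 | h2
    · exact hu _ _ _ h1 h2
    · exact absurd (hs (a, v) h1).2 (hout (b, v) h2)
    · exact absurd (hs (b, v) h2).2 (hout (a, v) h1)
    · exact hu' _ _ _ h1 h2
  · intro x hx
    by_cases hxK : x ∈ K
    · have key : ∀ b, Relation.TransGen (fun a b => (a, b) ∈ T ∪ outPart K F) x b → b ∈ K →
          Relation.TransGen (fun a b => (a, b) ∈ T) x b := by
        intro b h
        induction h with
        | single h =>
          intro hb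
          rcases Finset.mem_union.1 h with h | h
          · exact .single h
          · exact absurd hb (hout _ h)
        | tail _ h ih =>
          intro hb
          rcases Finset.mem_union.1 h with h | h
          · exact (ih (hs _ h).1).tail h
          · exact absurd hb (hout _ h)
      exact ha x (key x hx hxK)
    · have key : ∀ b, Relation.TransGen (fun a b => (a, b) ∈ T ∪ outPart K F) x b →
          b ∉ K ∧ Relation.TransGen (fun a b => (a, b) ∈ outPart K F) x b := by
        intro b h
        induction h with
        | single h =>
          rcases Finset.mem_union.1 h with h | h
          · exact absurd (hs _ h).1 hxK
          · exact ⟨hout _ h, .single h⟩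
        | tail _ h ih =>
          rcases Finset.mem_union.1 h with h | h
          · exact absurd (hs _ h).1 ih.1
          · exact ⟨hout _ h, ih.2.tail h⟩
      exact ha' x (key x hx).2

theorem inPart_union_outPart (K : Finset (Fin n)) (F : Finset (Fin n × Fin n)) :
    inPart K F ∪ outPart K F = F := Finset.filter_union_filter_not_eq _ _

theorem disjoint_outPart {W : Matrix (Fin n) (Fin n) ℝ} {K : Finset (Fin n)} {i : Fin n}
    {T : Finset (Fin n × Fin n)} (hT : T ∈ knotTrees W K i) (F : Finset (Fin n × Fin n)) :
    Disjoint T (outPart K F) :=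
  Finset.disjoint_left.2 fun e he h =>
    (Finset.mem_filter.1 h).2 ((mem_knotTrees.1 hT).2.1 e he).2

theorem inPart_glue {W : Matrix (Fin n) (Fin n) ℝ} {K : Finset (Fin n)} {i : Fin n}
    {T : Finset (Fin n × Fin n)} (hT : T ∈ knotTrees W K i) (F : Finset (Fin n × Fin n)) :
    inPart K (T ∪ outPart K F) = T := by
  have h := (mem_knotTrees.1 hT).2.1
  ext e
  simp only [inPart, outPart, Finset.mem_filter, Finset.mem_union]
  exact ⟨fun he => he.1.elim id fun h' => absurd he.2 h'.2, fun he => ⟨Or.inl he, (h e he).2⟩⟩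

theorem outPart_glue {W : Matrix (Fin n) (Fin n) ℝ} {K : Finset (Fin n)} {i : Fin n}
    {T : Finset (Fin n × Fin n)} (hT : T ∈ knotTrees W K i) (F : Finset (Fin n × Fin n)) :
    outPart K (T ∪ outPart K F) = outPart K F := by
  have h := (mem_knotTrees.1 hT).2.1
  ext e
  simp only [outPart, Finset.mem_filter, Finset.mem_union]
  exact ⟨fun he => he.1.elim (fun h' => absurd (h e h').2 he.2) id, fun he => ⟨Or.inr he, he.2⟩⟩

open scoped Classical in
/-- If every maximum out-forest has a single root in the knot `K`, then such a forest is a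
spanning tree of `K` glued to the part of a maximum out-forest outside `K`, chosen
independently. -/
theorem Qmat_eq_mul {W : Matrix (Fin n) (Fin n) ℝ} {K : Finset (Fin n)}
    (hK : IsSourceKnot W K)
    (huniq : ∀ F ∈ outForests W (maxArcs W), ∀ a ∈ K, ∀ b ∈ K,
      IsRoot F a → IsRoot F b → a = b)
    {i v : Fin n} (hi : i ∈ K) (hv : v ∈ K) :
    Qmat W (maxArcs W) i v = wtSet W (knotTrees W K i) *
      wtSet W ((outForests W (maxArcs W)).image (outPart K)) := by
  simp only [Qmat, wtSet]
  rw [Finset.sum_mul_sum, ← Finset.sum_product']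
  symm
  refine Finset.sum_bij (fun p _ => p.1 ∪ p.2) ?_ ?_ ?_ ?_
  · rintro ⟨T, G⟩ h
    obtain ⟨hT, hG⟩ := Finset.mem_product.1 h
    obtain ⟨F, hF, rfl⟩ := Finset.mem_image.1 hG
    simp only at hT
    obtain ⟨hFf, hFc⟩ := mem_outForests.1 hF
    obtain ⟨r, hr, hrv⟩ := (isOutForest_iff.1 hFf).2.2.exists_root v
    have hrK : r ∈ K := hK.mem_of_reach hv (hrv.reach hFf)
    have hin : inPart K F ∈ knotTrees W K r :=
      inPart_mem_knotTrees hK hFf fun a ha har => huniq F hF a ha r hrK har hr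
    refine Finset.mem_filter.2 ⟨mem_outForests.2 ⟨glue_isOutForest hT hFf, ?_⟩, ?_, ?_⟩
    · rw [Finset.card_union_of_disjoint (disjoint_outPart hT F), card_of_mem_knotTrees hi hT,
        ← card_of_mem_knotTrees hrK hin, ← Finset.card_union_of_disjoint (disjoint_outPart hin F),
        inPart_union_outPart, hFc]
    · intro e he
      rcases Finset.mem_union.1 he with he | he
      · exact isRoot_of_mem_knotTrees hT e he
      · rintro rfl
        exact (Finset.mem_filter.1 he).2 hi
    · exact ((mem_knotTrees.1 hT).2.2 v hv).mono Finset.subset_union_left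
  · rintro ⟨T, G⟩ h ⟨T', G'⟩ h' heq
    obtain ⟨hT, hG⟩ := Finset.mem_product.1 h
    obtain ⟨F, hF, rfl⟩ := Finset.mem_image.1 hG
    obtain ⟨hT', hG'⟩ := Finset.mem_product.1 h'
    obtain ⟨F', hF', rfl⟩ := Finset.mem_image.1 hG'
    simp only at hT hT' heq
    rw [Prod.mk.injEq]
    exact ⟨by rw [← inPart_glue hT F, heq, inPart_glue hT' F'],
      by rw [← outPart_glue hT F, heq, outPart_glue hT' F']⟩
  · intro F hF
    obtain ⟨hF, hroot, -⟩ := Finset.mem_filter.1 hF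
    refine ⟨(inPart K F, outPart K F), Finset.mem_product.2
      ⟨inPart_mem_knotTrees hK (mem_outForests.1 hF).1
        fun a ha har => huniq F hF a ha i hi har hroot,
        Finset.mem_image_of_mem _ hF⟩, inPart_union_outPart K F⟩
  · rintro ⟨T, G⟩ h
    obtain ⟨hT, hG⟩ := Finset.mem_product.1 h
    obtain ⟨F, hF, rfl⟩ := Finset.mem_image.1 hG
    simp only [wt]
    rw [Finset.prod_union (disjoint_outPart hT F)]

/-- A spanning tree of the knot diverges from exactly one vertex. -/
theorem wtSet_knotTreesAll (W : Matrix (Fin n) (Fin n) ℝ) (K : Finset (Fin n)) :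
    wtSet W (knotTreesAll W K) = ∑ k ∈ K, wtSet W (knotTrees W K k) := by
  classical
  have : knotTreesAll W K = K.biUnion (knotTrees W K) := by
    ext F
    simp only [knotTreesAll, Finset.mem_filter, Finset.mem_univ, true_and, Finset.mem_biUnion,
      mem_knotTrees]
    grind
  unfold wtSet
  rw [this, Finset.sum_biUnion]
  intro a ha b hb hab
  refine Finset.disjoint_left.2 fun F h1 h2 => hab ?_
  obtain ⟨hf, -, h1⟩ := mem_knotTrees.1 h1
  exact (isOutForest_iff.1 hf).2.2.antisymm (h1 b hb) ((mem_knotTrees.1 h2).2.2 a ha)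

theorem Jtil_eq_div {W : Matrix (Fin n) (Fin n) ℝ} {K : Finset (Fin n)}
    (hK : IsSourceKnot W K)
    (huniq : ∀ F ∈ outForests W (maxArcs W), ∀ a ∈ K, ∀ b ∈ K,
      IsRoot F a → IsRoot F b → a = b)
    {i v : Fin n} (hi : i ∈ K) (hv : v ∈ K) :
    Jtil W i v = wtSet W (knotTrees W K i) / wtSet W (knotTreesAll W K) := by
  classical
  set R := wtSet W ((outForests W (maxArcs W)).image (outPart K)) with hR
  have hsig : sigma W (maxArcs W) = wtSet W (knotTreesAll W K) * R := by
    rw [← sum_Qmat W _ v, wtSet_knotTreesAll, Finset.sum_mul,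
      ← Finset.sum_subset (Finset.subset_univ K)]
    · exact Finset.sum_congr rfl fun k hk => Qmat_eq_mul hK huniq hk hv
    · intro k _ hk
      have := Jtil_eq_zero hK hv hk
      simpa [Jtil, (sigma_pos W).ne'] using this
  have hpos := sigma_pos W
  have hR0 : R ≠ 0 := by
    intro h
    rw [hsig, h, mul_zero] at hpos
    exact lt_irrefl _ hpos
  simp only [Jtil, Matrix.smul_apply, smul_eq_mul]
  rw [Qmat_eq_mul hK huniq hi hv, ← hR, hsig, inv_mul_eq_div, mul_div_mul_right _ _ hR0]

open scoped Classical in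
/-- A maximum out-forest has `n - maxArcs W` roots. When this is also the number of source
knots, each of which contains at least one root, no knot contains two. -/
theorem root_unique_in_knot {W : Matrix (Fin n) (Fin n) ℝ} {d' : ℕ}
    (hd' : d' = n - maxArcs W) {K : Fin d' → Finset (Fin n)} (hK : ∀ s, IsSourceKnot W (K s))
    (hKinj : Function.Injective K) {j : Fin d' → Fin n} (hj : ∀ s, j s ∈ K s) (s : Fin d') :
    ∀ F ∈ outForests W (maxArcs W), ∀ a ∈ K s, ∀ b ∈ K s,
      IsRoot F a → IsRoot F b → a = b := by
  intro F hF
  obtain ⟨hf, hc⟩ := mem_outForests.1 hF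
  obtain ⟨-, hu, ha⟩ := isOutForest_iff.1 hf
  choose r hr hrj using fun s => ha.exists_root (j s)
  have hrK : ∀ s, r s ∈ K s := fun s => (hK s).mem_of_reach (hj s) ((hrj s).reach hf)
  have hcard := hu.card_add_roots
  have hsurj := Finset.surj_on_of_inj_on_of_card_le (s := (Finset.univ : Finset (Fin d')))
    (t := Finset.univ.filter (IsRoot F)) (fun s _ => r s) (fun s _ => by simpa using hr s)
    (fun s t _ _ h => hKinj ((hK s).eq_of_mem (hK t) (hrK s) (h ▸ hrK t)))
    (by rw [Finset.card_univ, Fintype.card_fin]; omega)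
  have key : ∀ a ∈ K s, IsRoot F a → a = r s := by
    intro a has har
    obtain ⟨t, -, rfl⟩ := hsurj a (by simpa using har)
    rw [hKinj ((hK t).eq_of_mem (hK s) (hrK t) has)]
  intro a has b hbs har hbr
  rw [key a has har, key b hbs hbr]

/-- Every column of `J̃` solves `Lx = 0`. Moreover, if `K₁, …, K_{d'}` are
the source knots of `Γ` (with `d' = n − maxArcs W` the out-forest dimension) and vertices
`j_s ∈ K_s` are chosen, then the columns `J̃_{•j₁}, …, J̃_{•j_{d'}}` form an orthogonal basis
of the null space `{x : Lx = 0}`; the column `J̃_{•j_s}` vanishes outside `K_s`, and its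
entry at each `i ∈ K_s` equals `w(𝒯_s^i)/w(𝒯_s)`. -/
theorem Jtil_columns_solve_Lx_eq_zero (n : ℕ) (hn : 1 < n)
    (W : Matrix (Fin n) (Fin n) ℝ)
    (hW0 : ∀ i j, 0 ≤ W i j) (hWd : ∀ i, W i i = 0)
    (d' : ℕ) (hd' : d' = n - maxArcs W)
    (K : Fin d' → Finset (Fin n))
    (hK : ∀ s, IsSourceKnot W (K s))
    (hKinj : Function.Injective K)
    (hKall : ∀ K' : Finset (Fin n), IsSourceKnot W K' → ∃ s, K' = K s)
    (j : Fin d' → Fin n) (hj : ∀ s, j s ∈ K s) :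
    (∀ v : Fin n, (Lap W).mulVec (fun i => Jtil W i v) = 0) ∧
    (∀ s t, s ≠ t → ∑ i, Jtil W i (j s) * Jtil W i (j t) = 0) ∧
    LinearIndependent ℝ (fun s : Fin d' => (fun i => Jtil W i (j s) : Fin n → ℝ)) ∧
    Submodule.span ℝ (Set.range (fun s : Fin d' => (fun i => Jtil W i (j s) : Fin n → ℝ)))
      = LinearMap.ker (Lap W).mulVecLin ∧
    (∀ s, ∀ i, i ∉ K s → Jtil W i (j s) = 0) ∧
    (∀ s, ∀ i ∈ K s,
      Jtil W i (j s) = wtSet W (knotTrees W (K s) i) / wtSet W (knotTreesAll W (K s))) := by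
  have hker := lap_mulVec_Jtil W hW0 hWd
  have hoff : ∀ s, ∀ i, i ∉ K s → Jtil W i (j s) = 0 := fun s i hi =>
    Jtil_eq_zero (hK s) (hj s) hi
  have hdisj : ∀ s t, s ≠ t → ∀ i, i ∈ K s → i ∉ K t := fun s t hst i hi hi' =>
    hst (hKinj ((hK s).eq_of_mem (hK t) hi hi'))
  have hdiag : ∀ s, Jtil W (j s) (j s) ≠ 0 := fun s =>
    Jtil_self_ne_zero hW0 hWd (hK s) (hj s)
  -- the matrix of the chosen columns at the chosen vertices is diagonal
  have heval : ∀ (g : Fin d' → ℝ) (t : Fin d'),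
      (∑ s, g s • (fun i => Jtil W i (j s) : Fin n → ℝ)) (j t) = g t * Jtil W (j t) (j t) := by
    intro g t
    rw [Finset.sum_apply, Finset.sum_eq_single t]
    · simp
    · intro s _ hst
      simp [hoff s (j t) (hdisj t s hst.symm _ (hj t))]
    · simp
  refine ⟨hker, ?_, ?_, ?_, hoff, fun s i hi =>
    Jtil_eq_div (hK s) (root_unique_in_knot hd' hK hKinj hj s) hi (hj s)⟩
  · intro s t hst
    refine Finset.sum_eq_zero fun i _ => ?_
    by_cases hi : i ∈ K s
    · rw [hoff t i (hdisj s t hst i hi), mul_zero]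
    · rw [hoff s i hi, zero_mul]
  · rw [Fintype.linearIndependent_iff]
    intro g hg t
    have h := heval g t
    rw [hg] at h
    exact (mul_eq_zero.1 h.symm).resolve_right (hdiag t)
  · apply le_antisymm
    · rw [Submodule.span_le]
      rintro _ ⟨s, rfl⟩
      simpa using hker (j s)
    · intro x hx
      rw [LinearMap.mem_ker, Matrix.mulVecLin_apply] at hx
      -- subtract the combination of columns agreeing with `x` at every chosen vertex
      let g : Fin d' → ℝ := fun s => x (j s) / Jtil W (j s) (j s)
      have hy : x - ∑ s, g s • (fun i => Jtil W i (j s) : Fin n → ℝ) = 0 := by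
        apply ker_eq_zero hW0 hWd
        · rw [Matrix.mulVec_sub, hx, Matrix.mulVec_sum]
          simp [Matrix.mulVec_smul, hker]
        · intro K' hK'
          obtain ⟨t, rfl⟩ := hKall K' hK'
          refine ⟨j t, hj t, ?_⟩
          rw [Pi.sub_apply, heval, div_mul_cancel₀ _ (hdiag t), sub_self]
      rw [sub_eq_zero.1 hy]
      exact Submodule.sum_mem _ fun s _ =>
        Submodule.smul_mem _ _ (Submodule.subset_span ⟨s, rfl⟩)

end ForestMatrix
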